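/- arXiv:1203.0253 — 2 statements merged into one kernel-verified Lean document; each statement's English description precedes it below -/
import Mathlib

section
/- Let f ∈ ℚ[X₁,…,Xₙ], let e ≥ 0 be an integer, set d = e + ⌈deg(f)/2⌉, and let 𝒯 be any subset of the set of monomials of total degree ≤ e. Then the following are equivalent: (1) f ∉ RSOS(𝒯); (2) there exists a rational sequence ŷ ∈ ℚ^m with m = C(n+2d, 2d), indexed by multi-indices of degree ≤ 2d, whose associated linear form L_ŷ on polynomials of degree ≤ 2d satisfies: for every nonzero polynomial v with supp(v) ⊆ 𝒯 one has L_ŷ(f·v²) < 0, and for every polynomial u of degree ≤ d one has L_ŷ(u²) ≥ 0. -/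
open MvPolynomial

/-- Exponent multi-indices in `n` variables of total degree at most `d`
(the exponents of the monomials of total degree `≤ d`). -/
abbrev Idx (n d : ℕ) : Type := {α : Fin n →₀ ℕ // α.degree ≤ d}

noncomputable instance (n d : ℕ) : Fintype (Idx n d) :=
  Set.Finite.fintype (s := {α : Fin n →₀ ℕ | α.degree ≤ d}) <| by
    apply Set.Finite.subset
      (Set.finite_Iic (Finsupp.equivFunOnFinite.symm fun _ : Fin n => d))
    intro α hα
    simp only [Set.mem_Iic, Finsupp.le_def]
    intro i
    exact le_trans (Finsupp.le_degree i α) hα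

/-- `f ∈ RSOS(𝒯)` : there are polynomials `u₁,…,u_l, v₁,…,v_{l'}` with
`supp(vⱼ) ⊆ 𝒯` for all `j` and `Σⱼ vⱼ² ≠ 0` such that `f · Σⱼ vⱼ² = Σᵢ uᵢ²`. -/
def RSOS (n : ℕ) (𝒯 : Finset (Fin n →₀ ℕ)) (f : MvPolynomial (Fin n) ℝ) : Prop :=
  ∃ (l l' : ℕ) (u : Fin l → MvPolynomial (Fin n) ℝ)
    (v : Fin l' → MvPolynomial (Fin n) ℝ),
    (∀ j, (v j).support ⊆ 𝒯) ∧ (∑ j, v j ^ 2) ≠ 0 ∧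
      f * (∑ j, v j ^ 2) = ∑ i, u i ^ 2

/-- `f/g ∈ RSOS(𝒯)` for a rational function `f/g` : there are polynomials
`u₁,…,u_l, v₁,…,v_{l'}` with `supp(vⱼ) ⊆ 𝒯` for all `j` and `Σⱼ vⱼ² ≠ 0`
such that `f · Σⱼ vⱼ² = g · Σᵢ uᵢ²`. -/
def RSOSfrac (n : ℕ) (𝒯 : Finset (Fin n →₀ ℕ)) (f g : MvPolynomial (Fin n) ℝ) : Prop :=
  ∃ (l l' : ℕ) (u : Fin l → MvPolynomial (Fin n) ℝ)
    (v : Fin l' → MvPolynomial (Fin n) ℝ),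
    (∀ j, (v j).support ⊆ 𝒯) ∧ (∑ j, v j ^ 2) ≠ 0 ∧
      f * (∑ j, v j ^ 2) = g * ∑ i, u i ^ 2

/-- The moment matrix of order `t` of a sequence `y`, with rows and columns
indexed by multi-indices of degree `≤ t` and `(α,β)` entry `y_{α+β}`. -/
noncomputable def momentMatrix (n t : ℕ) (y : (Fin n →₀ ℕ) → ℝ) :
    Matrix (Idx n t) (Idx n t) ℝ :=
  fun α β => y (α.1 + β.1)

/-- The localizing moment matrix `M_t(qy)` of order `t`, with `(α,β)` entry
`Σ_γ q_γ y_{γ+α+β}`. -/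
noncomputable def locMomentMatrix (n t : ℕ) (q : MvPolynomial (Fin n) ℝ)
    (y : (Fin n →₀ ℕ) → ℝ) : Matrix (Idx n t) (Idx n t) ℝ :=
  fun α β => ∑ γ ∈ q.support, q.coeff γ * y (γ + α.1 + β.1)

/-- The localizing moment matrix `M(qy)` with rows and columns indexed by the
exponents of the monomials in `𝒯`, with `(α,β)` entry `Σ_γ q_γ y_{γ+α+β}`. -/
noncomputable def locMomentMatrixOn (n : ℕ) (𝒯 : Finset (Fin n →₀ ℕ))
    (q : MvPolynomial (Fin n) ℝ) (y : (Fin n →₀ ℕ) → ℝ) : Matrix 𝒯 𝒯 ℝ :=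
  fun α β => ∑ γ ∈ q.support, q.coeff γ * y (γ + α.1 + β.1)

/-- The linear form `L_y(p) = Σ_α y_α p_α` associated to a sequence `y`. -/
noncomputable def LForm (n : ℕ) (y : (Fin n →₀ ℕ) → ℝ)
    (p : MvPolynomial (Fin n) ℝ) : ℝ :=
  ∑ α ∈ p.support, y α * p.coeff α

/-- `p` is a sum of squares of polynomials. -/
def IsSOS (n : ℕ) (p : MvPolynomial (Fin n) ℝ) : Prop :=
  ∃ (l : ℕ) (u : Fin l → MvPolynomial (Fin n) ℝ), p = ∑ i, u i ^ 2

section Convexity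

/-- In a finite-dimensional real normed space the convex hull of a compact set is compact. -/
theorem isCompact_convexHull_of_finiteDimensional {E : Type*} [NormedAddCommGroup E]
    [NormedSpace ℝ E] [FiniteDimensional ℝ E] {s : Set E} (hs : IsCompact s) :
    IsCompact (convexHull ℝ s) := by
  rcases s.eq_empty_or_nonempty with rfl | ⟨x₀, hx₀⟩
  · simp
  let N := Module.finrank ℝ E + 1
  have hK : IsCompact ((fun p : (Fin N → ℝ) × (Fin N → E) => ∑ i, p.1 i • p.2 i) ''
      (stdSimplex ℝ (Fin N) ×ˢ Set.univ.pi fun _ => s)) :=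
    ((isCompact_stdSimplex ℝ (Fin N)).prod (isCompact_univ_pi fun _ => hs)).image (by fun_prop)
  convert hK using 1
  apply Set.Subset.antisymm
  · intro x hx
    obtain ⟨ι, _, z, w, hz, hind, hw, hw1, rfl⟩ := eq_pos_convex_span_of_mem_convexHull hx
    have hcard : Fintype.card ι ≤ Fintype.card (Fin N) := by
      rw [Fintype.card_fin]
      exact hind.card_le_finrank_succ.trans (Nat.succ_le_succ (Submodule.finrank_le _))
    obtain ⟨g⟩ := Function.Embedding.nonempty_of_card_le hcard
    have hout : ∀ i, i ∉ Set.range g → Function.extend g w 0 i = 0 := fun i hi =>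
      Function.extend_apply' _ _ _ hi
    refine ⟨(Function.extend g w 0, Function.extend g z fun _ => x₀), ⟨⟨?_, ?_⟩, ?_⟩, ?_⟩
    · intro i
      by_cases hi : i ∈ Set.range g
      · obtain ⟨j, rfl⟩ := hi
        simpa [g.injective.extend_apply] using (hw j).le
      · simp [hout i hi]
    · rw [← hw1]
      exact (Fintype.sum_of_injective g g.injective _ _ hout
        fun i => (g.injective.extend_apply _ _ _).symm).symm
    · intro i _
      by_cases hi : i ∈ Set.range g
      · obtain ⟨j, rfl⟩ := hi
        simpa [g.injective.extend_apply] using hz ⟨j, rfl⟩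
      · simpa [Function.extend_apply' _ _ _ hi] using hx₀
    · refine (Fintype.sum_of_injective g g.injective _ _ (fun i hi => ?_) fun i => ?_).symm
      · simp [hout i hi]
      · simp [g.injective.extend_apply]
  · rintro _ ⟨⟨w, z⟩, ⟨⟨hw, hw1⟩, hz⟩, rfl⟩
    exact (convex_convexHull ℝ s).sum_mem (fun i _ => hw i) hw1
      fun i _ => subset_convexHull ℝ s (hz i trivial)

/-- A compact set whose convex hull avoids the origin lies in an open half-space with rational
normal vector through the origin. -/
theorem exists_rat_forall_sum_mul_pos {ι : Type*} [Fintype ι] {S : Set (ι → ℝ)}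
    (hS : IsCompact S) (h0 : (0 : ι → ℝ) ∉ convexHull ℝ S) :
    ∃ q : ι → ℚ, ∀ z ∈ S, 0 < ∑ i, (q i : ℝ) * z i := by
  classical
  obtain ⟨L, c, hc, hL⟩ := geometric_hahn_banach_point_closed (convex_convexHull ℝ S)
    (isCompact_convexHull_of_finiteDimensional hS).isClosed h0
  rw [map_zero] at hc
  obtain ⟨M, hM, hSM⟩ := hS.isBounded.exists_pos_norm_le
  set ε : ℝ := c / ((Fintype.card ι + 1) * M) with hε
  have hεpos : 0 < ε := by positivity
  have hq (i : ι) : ∃ r : ℚ, |(r : ℝ) - L (Pi.single i 1)| < ε := by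
    obtain ⟨r, hr₁, hr₂⟩ := exists_rat_btwn (lt_add_of_pos_right (L (Pi.single i 1)) hεpos)
    exact ⟨r, by rw [abs_lt]; constructor <;> linarith⟩
  choose q hq using hq
  refine ⟨q, fun z hz => ?_⟩
  have hLz : L z = ∑ i, L (Pi.single i 1) * z i := by
    conv_lhs => rw [pi_eq_sum_univ' z]
    simp [mul_comm]
  have hdiff : |∑ i, ((q i : ℝ) - L (Pi.single i 1)) * z i| ≤ Fintype.card ι * (ε * M) := by
    refine (Finset.abs_sum_le_sum_abs _ _).trans ?_
    refine (Finset.sum_le_card_nsmul _ _ (ε * M) fun i _ => ?_).trans (by simp)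
    rw [abs_mul]
    exact mul_le_mul (hq i).le ((norm_le_pi_norm z i).trans (hSM z hz)) (abs_nonneg _) hεpos.le
  have hsmall : Fintype.card ι * (ε * M) < c := by
    have : (Fintype.card ι + 1) * (ε * M) = c := by rw [hε]; field_simp
    nlinarith [mul_pos hεpos hM]
  have hsplit : ∑ i, (q i : ℝ) * z i = L z + ∑ i, ((q i : ℝ) - L (Pi.single i 1)) * z i := by
    rw [hLz, ← Finset.sum_add_distrib]
    exact Finset.sum_congr rfl fun i _ => by ring
  have := hL z (subset_convexHull ℝ S hz)
  have := (abs_le.1 hdiff).1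
  linarith

end Convexity

section SumsOfSquares

variable {n : ℕ}

/-- Sums of squares of polynomials supported on `T`. -/
def sosOn (T : Finset (Fin n →₀ ℕ)) : Set (MvPolynomial (Fin n) ℝ) :=
  {p | ∃ (l : ℕ) (v : Fin l → MvPolynomial (Fin n) ℝ),
    (∀ j, (v j).support ⊆ T) ∧ p = ∑ j, v j ^ 2}

variable {T : Finset (Fin n →₀ ℕ)}

theorem zero_mem_sosOn : (0 : MvPolynomial (Fin n) ℝ) ∈ sosOn T :=
  ⟨0, Fin.elim0, fun j => j.elim0, by simp⟩

theorem sq_mem_sosOn {v : MvPolynomial (Fin n) ℝ} (hv : v.support ⊆ T) : v ^ 2 ∈ sosOn T :=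
  ⟨1, fun _ => v, fun _ => hv, by simp⟩

theorem add_mem_sosOn {p q : MvPolynomial (Fin n) ℝ} (hp : p ∈ sosOn T) (hq : q ∈ sosOn T) :
    p + q ∈ sosOn T := by
  obtain ⟨l, u, hu, rfl⟩ := hp
  obtain ⟨l', v, hv, rfl⟩ := hq
  refine ⟨l + l', Fin.append u v, fun j => ?_, by simp [Fin.sum_univ_add]⟩
  refine Fin.addCases (fun i => ?_) (fun i => ?_) j
  · simpa using hu i
  · simpa using hv i

theorem smul_mem_sosOn {p : MvPolynomial (Fin n) ℝ} (hp : p ∈ sosOn T) {c : ℝ} (hc : 0 ≤ c) :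
    c • p ∈ sosOn T := by
  obtain ⟨l, u, hu, rfl⟩ := hp
  refine ⟨l, fun i => √c • u i, fun i => (support_smul).trans (hu i), ?_⟩
  simp [Finset.smul_sum, smul_pow, Real.sq_sqrt hc]

theorem eval_nonneg_of_mem_sosOn {p : MvPolynomial (Fin n) ℝ} (hp : p ∈ sosOn T)
    (x : Fin n → ℝ) : 0 ≤ eval x p := by
  obtain ⟨l, u, -, rfl⟩ := hp
  simpa using Finset.sum_nonneg fun i _ => sq_nonneg (eval x (u i))

theorem eq_zero_of_add_eq_zero_of_mem_sosOn {p q : MvPolynomial (Fin n) ℝ} (hp : p ∈ sosOn T)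
    (hq : q ∈ sosOn T) (h : p + q = 0) : p = 0 ∧ q = 0 := by
  have hx (x : Fin n → ℝ) : eval x p = 0 ∧ eval x q = 0 := by
    have := congrArg (eval x) h
    rw [map_add, map_zero] at this
    exact (add_eq_zero_iff_of_nonneg (eval_nonneg_of_mem_sosOn hp x)
      (eval_nonneg_of_mem_sosOn hq x)).1 this
  exact ⟨MvPolynomial.funext fun x => by simpa using (hx x).1,
    MvPolynomial.funext fun x => by simpa using (hx x).2⟩

/-- Leading terms cannot cancel in a real sum of squares. -/
theorem two_mul_totalDegree_le_totalDegree_sum_sq {ι : Type*} [Fintype ι]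
    (u : ι → MvPolynomial (Fin n) ℝ) (i : ι) :
    2 * (u i).totalDegree ≤ (∑ j, u j ^ 2).totalDegree := by
  classical
  let m : MonomialOrder (Fin n) := MonomialOrder.degLex
  rcases eq_or_ne (u i) 0 with hi | hi
  · simp [hi]
  obtain ⟨k, hk, hmax⟩ := (Finset.univ.filter fun j => u j ≠ 0).exists_max_image
    (fun j => m.toSyn (m.degree (u j))) ⟨i, by simpa using hi⟩
  have hk0 : u k ≠ 0 := by simpa using hk
  have hle (j : ι) : m.toSyn (m.degree (u j)) ≤ m.toSyn (m.degree (u k)) := by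
    rcases eq_or_ne (u j) 0 with hj | hj
    · simp [hj]
    · exact hmax j (by simpa using hj)
  have hcoeff : (∑ j, u j ^ 2).coeff (m.degree (u k) + m.degree (u k)) =
      ∑ j, (u j).coeff (m.degree (u k)) ^ 2 := by
    rw [coeff_sum]
    refine Finset.sum_congr rfl fun j _ => ?_
    rw [sq, sq, m.coeff_mul_of_add_of_degree_le (hle j) (hle j)]
  have hmem : m.degree (u k) + m.degree (u k) ∈ (∑ j, u j ^ 2).support := by
    rw [mem_support_iff, hcoeff]
    refine (Finset.sum_pos' (fun j _ => sq_nonneg _) ⟨k, Finset.mem_univ k, ?_⟩).ne'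
    exact sq_pos_of_ne_zero (m.coeff_degree_ne_zero_iff.2 hk0)
  have hdeg : (m.degree (u k) + m.degree (u k)).degree ≤ (∑ j, u j ^ 2).totalDegree :=
    le_totalDegree hmem
  rw [map_add, degree_degLexDegree] at hdeg
  have := degLex_totalDegree_monotone (hle i)
  omega

end SumsOfSquares

section CoefficientVectors

variable {n : ℕ}

/-- The vector of coefficients of degree at most `N` of a polynomial. -/
noncomputable def coeffVec (n N : ℕ) : MvPolynomial (Fin n) ℝ →ₗ[ℝ] (Idx n N → ℝ) :=
  LinearMap.pi fun α => lcoeff ℝ α.1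

@[simp]
theorem coeffVec_apply {N : ℕ} (p : MvPolynomial (Fin n) ℝ) (α : Idx n N) :
    coeffVec n N p α = p.coeff α.1 := rfl

theorem degree_le_totalDegree_of_mem_support {p : MvPolynomial (Fin n) ℝ} {α : Fin n →₀ ℕ}
    (hα : α ∈ p.support) : α.degree ≤ p.totalDegree :=
  le_totalDegree hα

theorem LForm_eq_sum_coeffVec {N : ℕ} (y : (Fin n →₀ ℕ) → ℝ) {p : MvPolynomial (Fin n) ℝ}
    (hp : p.totalDegree ≤ N) : LForm n y p = ∑ α : Idx n N, y α.1 * coeffVec n N p α := by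
  classical
  have hsub : p.support ⊆ Finset.univ.image (Subtype.val : Idx n N → _) := fun α hα =>
    Finset.mem_image.2 ⟨⟨α, (degree_le_totalDegree_of_mem_support hα).trans hp⟩, by simp⟩
  rw [LForm, Finset.sum_subset hsub fun α _ hα => by simp [notMem_support_iff.1 hα],
    Finset.sum_image Subtype.val_injective.injOn]
  rfl

theorem LForm_sum {N : ℕ} (y : (Fin n →₀ ℕ) → ℝ) {ι : Type*} [Fintype ι]
    {p : ι → MvPolynomial (Fin n) ℝ} (hp : ∀ i, (p i).totalDegree ≤ N) :
    LForm n y (∑ i, p i) = ∑ i, LForm n y (p i) := by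
  rw [LForm_eq_sum_coeffVec y (totalDegree_finsetSum_le fun i _ => hp i)]
  simp_rw [fun i => LForm_eq_sum_coeffVec y (hp i), map_sum, Finset.sum_apply, Finset.mul_sum]
  exact Finset.sum_comm

theorem eq_zero_of_coeffVec_eq_zero {N : ℕ} {p : MvPolynomial (Fin n) ℝ}
    (hp : p.totalDegree ≤ N) (h : coeffVec n N p = 0) : p = 0 := by
  by_contra hne
  obtain ⟨α, hα⟩ := support_nonempty.2 hne
  exact mem_support_iff.1 hα
    (congrFun h ⟨α, (degree_le_totalDegree_of_mem_support hα).trans hp⟩)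

/-- The polynomial supported on `T` with coefficients `a`. -/
noncomputable def polyOf (T : Finset (Fin n →₀ ℕ)) (a : T → ℝ) : MvPolynomial (Fin n) ℝ :=
  ∑ α : T, a α • monomial α.1 (1 : ℝ)

theorem coeff_polyOf (T : Finset (Fin n →₀ ℕ)) (a : T → ℝ) (α : T) :
    (polyOf T a).coeff α.1 = a α := by
  classical
  simp [polyOf, coeff_sum, coeff_monomial]

theorem support_polyOf_subset (T : Finset (Fin n →₀ ℕ)) (a : T → ℝ) :
    (polyOf T a).support ⊆ T := by
  classical
  intro α hα
  by_contra hT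
  refine mem_support_iff.1 hα ?_
  simp only [polyOf, coeff_sum, coeff_smul, coeff_monomial]
  refine Finset.sum_eq_zero fun β _ => ?_
  rw [if_neg (fun h : β.1 = α => hT (h ▸ β.2)), smul_zero]

theorem polyOf_ne_zero {T : Finset (Fin n →₀ ℕ)} {a : T → ℝ} (ha : a ≠ 0) :
    polyOf T a ≠ 0 := fun h => ha <| funext fun α => by
  rw [← coeff_polyOf T a α, h, coeff_zero, Pi.zero_apply]

/-- Every nonzero polynomial supported on `T` is a positive multiple of one whose coefficient
vector is normalized. -/
theorem exists_eq_smul_polyOf {T : Finset (Fin n →₀ ℕ)} {v : MvPolynomial (Fin n) ℝ}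
    (hv : v ≠ 0) (hT : v.support ⊆ T) :
    ∃ a ∈ Metric.sphere (0 : T → ℝ) 1, ∃ c : ℝ, 0 < c ∧ v = c • polyOf T a := by
  classical
  let b : T → ℝ := fun α => v.coeff α.1
  have hvb : v = polyOf T b := by
    ext α
    by_cases hα : α ∈ T
    · exact (coeff_polyOf T b ⟨α, hα⟩).symm
    · rw [notMem_support_iff.1 fun h => hα (hT h),
        notMem_support_iff.1 fun h => hα (support_polyOf_subset T b h)]
  have hb : b ≠ 0 := by
    rintro hb
    exact hv (by rw [hvb, hb]; simp [polyOf])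
  refine ⟨‖b‖⁻¹ • b, ?_, ‖b‖, norm_pos_iff.2 hb, ?_⟩
  · simp [norm_smul, hb]
  · rw [hvb, polyOf, polyOf, Finset.smul_sum]
    refine Finset.sum_congr rfl fun α _ => ?_
    rw [smul_smul, Pi.smul_apply, smul_eq_mul, mul_inv_cancel_left₀ (norm_ne_zero_iff.2 hb)]

theorem continuous_coeffVec_mul_polyOf_sq (N : ℕ) (q : MvPolynomial (Fin n) ℝ)
    (T : Finset (Fin n →₀ ℕ)) : Continuous fun a : T → ℝ => coeffVec n N (q * polyOf T a ^ 2) := by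
  have h (a : T → ℝ) : coeffVec n N (q * polyOf T a ^ 2) = ∑ α : T, ∑ β : T, (a α * a β) •
      coeffVec n N (q * (monomial α.1 (1 : ℝ) * monomial β.1 (1 : ℝ))) := by
    rw [polyOf, sq, Finset.sum_mul_sum]
    simp_rw [smul_mul_smul_comm, Finset.mul_sum, map_sum, mul_smul_comm, map_smul]
  simp_rw [h]
  fun_prop

/-- The image of the normalized polynomials supported on `T` under `v ↦ q * v ^ 2`. -/
def sqImage (N : ℕ) (q : MvPolynomial (Fin n) ℝ) (T : Finset (Fin n →₀ ℕ)) :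
    Set (Idx n N → ℝ) :=
  (fun a : T → ℝ => coeffVec n N (q * polyOf T a ^ 2)) '' Metric.sphere 0 1

theorem isCompact_sqImage (N : ℕ) (q : MvPolynomial (Fin n) ℝ) (T : Finset (Fin n →₀ ℕ)) :
    IsCompact (sqImage N q T) :=
  (isCompact_sphere 0 1).image (continuous_coeffVec_mul_polyOf_sq N q T)

theorem LForm_mul_sq_pos {N : ℕ} {y : (Fin n →₀ ℕ) → ℝ} {q : MvPolynomial (Fin n) ℝ}
    {T : Finset (Fin n →₀ ℕ)} (hy : ∀ z ∈ sqImage N q T, 0 < ∑ α : Idx n N, y α.1 * z α)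
    {v : MvPolynomial (Fin n) ℝ} (hv : v ≠ 0) (hT : v.support ⊆ T)
    (hdeg : (q * v ^ 2).totalDegree ≤ N) : 0 < LForm n y (q * v ^ 2) := by
  obtain ⟨a, ha, c, hc, rfl⟩ := exists_eq_smul_polyOf hv hT
  rw [LForm_eq_sum_coeffVec y hdeg, smul_pow, mul_smul_comm, map_smul]
  simp_rw [Pi.smul_apply, smul_eq_mul, mul_left_comm _ (c ^ 2), ← Finset.mul_sum]
  exact mul_pos (pow_pos hc 2) (hy _ ⟨a, ha, rfl⟩)

theorem totalDegree_mul_sq_le {q v : MvPolynomial (Fin n) ℝ} {d k : ℕ}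
    (hq : q.totalDegree ≤ k) (hv : v.totalDegree ≤ d) : (q * v ^ 2).totalDegree ≤ k + 2 * d :=
  (totalDegree_mul _ _).trans
    (add_le_add hq ((totalDegree_pow _ _).trans (Nat.mul_le_mul_left 2 hv)))

theorem totalDegree_le_of_support_subset_of_degree_le {T : Finset (Fin n →₀ ℕ)} {d : ℕ}
    (hT : ∀ α ∈ T, α.degree ≤ d) {v : MvPolynomial (Fin n) ℝ} (hv : v.support ⊆ T) :
    v.totalDegree ≤ d :=
  Finset.sup_le fun α hα => hT α (hv hα)

theorem totalDegree_mul_le_of_mem_sosOn {T : Finset (Fin n →₀ ℕ)} {d k : ℕ}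
    (hT : ∀ α ∈ T, α.degree ≤ d) {q s : MvPolynomial (Fin n) ℝ} (hq : q.totalDegree ≤ k)
    (hs : s ∈ sosOn T) : (q * s).totalDegree ≤ k + 2 * d := by
  obtain ⟨l, v, hv, rfl⟩ := hs
  rw [Finset.mul_sum]
  exact totalDegree_finsetSum_le fun j _ =>
    totalDegree_mul_sq_le hq (totalDegree_le_of_support_subset_of_degree_le hT (hv j))

/-- The polynomials `t - q * s` with `s`, `t` sums of squares supported on `T`, `D`,
not both zero. -/
def sosDifferences (q : MvPolynomial (Fin n) ℝ) (T D : Finset (Fin n →₀ ℕ)) :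
    Set (MvPolynomial (Fin n) ℝ) :=
  {w | ∃ s ∈ sosOn T, ∃ t ∈ sosOn D, (s ≠ 0 ∨ t ≠ 0) ∧ w = t - q * s}

theorem convex_sosDifferences (q : MvPolynomial (Fin n) ℝ) (T D : Finset (Fin n →₀ ℕ)) :
    Convex ℝ (sosDifferences q T D) := by
  rintro _ ⟨s, hs, t, ht, hst, rfl⟩ _ ⟨s', hs', t', ht', hst', rfl⟩ a b ha hb hab
  refine ⟨a • s + b • s', add_mem_sosOn (smul_mem_sosOn hs ha) (smul_mem_sosOn hs' hb),
    a • t + b • t', add_mem_sosOn (smul_mem_sosOn ht ha) (smul_mem_sosOn ht' hb), ?_, ?_⟩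
  · by_contra! h
    have h₁ := eq_zero_of_add_eq_zero_of_mem_sosOn (smul_mem_sosOn hs ha) (smul_mem_sosOn hs' hb) h.1
    have h₂ := eq_zero_of_add_eq_zero_of_mem_sosOn (smul_mem_sosOn ht ha) (smul_mem_sosOn ht' hb) h.2
    simp only [smul_eq_zero] at h₁ h₂
    have ha0 : a = 0 := by tauto
    have hb0 : b = 0 := by tauto
    simp [ha0, hb0] at hab
  · simp only [smul_sub, mul_add, mul_smul_comm]
    abel

theorem zero_notMem_convexHull_sqImage {q : MvPolynomial (Fin n) ℝ}
    {T D : Finset (Fin n →₀ ℕ)} {N e d : ℕ} (hT : ∀ α ∈ T, α.degree ≤ e)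
    (hD : ∀ α ∈ D, α.degree ≤ d) (hN : q.totalDegree + 2 * e ≤ N) (hN' : 2 * d ≤ N)
    (hq : ¬ RSOS n T q) :
    (0 : Idx n N → ℝ) ∉ convexHull ℝ (sqImage N (-q) T ∪ sqImage N 1 D) := by
  intro h0
  have hsub : sqImage N (-q) T ∪ sqImage N 1 D ⊆ coeffVec n N '' sosDifferences q T D := by
    have hne {S : Finset (Fin n →₀ ℕ)} {a : S → ℝ} (ha : a ∈ Metric.sphere (0 : S → ℝ) 1) :
        polyOf S a ^ 2 ≠ 0 :=
      pow_ne_zero 2 (polyOf_ne_zero (ne_zero_of_mem_unit_sphere ⟨a, ha⟩))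
    rintro _ (⟨a, ha, rfl⟩ | ⟨a, ha, rfl⟩)
    · exact ⟨_, ⟨_, sq_mem_sosOn (support_polyOf_subset T a), 0, zero_mem_sosOn,
        Or.inl (hne ha), rfl⟩, by simp⟩
    · exact ⟨_, ⟨0, zero_mem_sosOn, _, sq_mem_sosOn (support_polyOf_subset D a),
        Or.inr (hne ha), rfl⟩, by simp⟩
  obtain ⟨_, ⟨s, hs, t, ht, hst, rfl⟩, hw⟩ :=
    convexHull_min hsub ((convex_sosDifferences q T D).linear_image (coeffVec n N)) h0
  have hdeg : (t - q * s).totalDegree ≤ N := by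
    refine (totalDegree_sub _ _).trans (max_le ?_ ?_)
    · have := totalDegree_mul_le_of_mem_sosOn hD (q := 1) (k := 0) (by simp) ht
      rw [one_mul] at this
      omega
    · exact (totalDegree_mul_le_of_mem_sosOn hT le_rfl hs).trans hN
  have heq : t = q * s := sub_eq_zero.1 (eq_zero_of_coeffVec_eq_zero hdeg hw)
  have hs0 : s ≠ 0 := by
    rintro rfl
    simp [heq] at hst
  obtain ⟨l', v, hv, rfl⟩ := hs
  obtain ⟨l, u, -, rfl⟩ := ht
  exact hq ⟨l, l', u, v, hv, hs0, heq.symm⟩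

end CoefficientVectors

/-- for `f ∈ ℚ[X]` and `d = e + ⌈deg f / 2⌉`, `f ∉ RSOS(𝒯)` iff
there is a rational sequence `ŷ` whose associated linear form `L_ŷ` satisfies
`L_ŷ(f·v²) < 0` for every nonzero `v` with `supp(v) ⊆ 𝒯`, and `L_ŷ(u²) ≥ 0` for
every polynomial `u` of total degree `≤ d`. -/
theorem statement4 (n e : ℕ) (f : MvPolynomial (Fin n) ℚ)
    (𝒯 : Finset (Fin n →₀ ℕ)) (h𝒯 : ∀ α ∈ 𝒯, α.degree ≤ e) :
    ¬ RSOS n 𝒯 (f.map (algebraMap ℚ ℝ)) ↔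
      ∃ yhat : (Fin n →₀ ℕ) → ℚ,
        (∀ v : MvPolynomial (Fin n) ℝ, v ≠ 0 → v.support ⊆ 𝒯 →
          LForm n (fun α => (yhat α : ℝ)) ((f.map (algebraMap ℚ ℝ)) * v ^ 2) < 0) ∧
        (∀ u : MvPolynomial (Fin n) ℝ, u.totalDegree ≤ e + (f.totalDegree + 1) / 2 →
          0 ≤ LForm n (fun α => (yhat α : ℝ)) (u ^ 2)) := by
  classical
  set g : MvPolynomial (Fin n) ℝ := f.map (algebraMap ℚ ℝ) with hg
  set d := e + (f.totalDegree + 1) / 2 with hd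
  have hgdeg : g.totalDegree ≤ f.totalDegree := totalDegree_le_of_support_subset_of_degree_le
    (fun _ hα => le_totalDegree hα) (support_map_subset _ _)
  have hN : g.totalDegree + 2 * e ≤ 2 * d := by omega
  have hdeg {v : MvPolynomial (Fin n) ℝ} (hv : v.support ⊆ 𝒯) :
      (g * v ^ 2).totalDegree ≤ 2 * d :=
    (totalDegree_mul_sq_le le_rfl (totalDegree_le_of_support_subset_of_degree_le h𝒯 hv)).trans hN
  have hsqdeg {u : MvPolynomial (Fin n) ℝ} (hu : u.totalDegree ≤ d) :
      (u ^ 2).totalDegree ≤ 2 * d :=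
    (totalDegree_pow _ _).trans (Nat.mul_le_mul_left 2 hu)
  constructor
  · intro h
    let D : Finset (Fin n →₀ ℕ) := Finset.univ.image (Subtype.val : Idx n d → _)
    have hD : ∀ α ∈ D, α.degree ≤ d := by
      intro α hα
      obtain ⟨β, -, rfl⟩ := Finset.mem_image.1 hα
      exact β.2
    obtain ⟨q, hq⟩ := exists_rat_forall_sum_mul_pos
      ((isCompact_sqImage (2 * d) (-g) 𝒯).union (isCompact_sqImage (2 * d) 1 D))
      (zero_notMem_convexHull_sqImage h𝒯 hD hN le_rfl h)
    let y : (Fin n →₀ ℕ) → ℚ := fun α => if hα : α.degree ≤ 2 * d then q ⟨α, hα⟩ else 0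
    have hy (α : Idx n (2 * d)) : y α.1 = q α := dif_pos α.2
    refine ⟨y, fun v hv hvT => ?_, fun u hu => ?_⟩
    · have := LForm_mul_sq_pos (y := fun α => (y α : ℝ)) (N := 2 * d) (q := -g) (T := 𝒯)
        (fun z hz => by simpa only [hy] using hq z (Or.inl hz)) hv hvT
        (by rw [neg_mul, totalDegree_neg]; exact hdeg hvT)
      rw [neg_mul] at this
      simpa [LForm] using this
    · rcases eq_or_ne u 0 with rfl | hu0
      · simp [LForm]
      have := LForm_mul_sq_pos (y := fun α => (y α : ℝ)) (N := 2 * d) (q := 1) (T := D)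
        (fun z hz => by simpa only [hy] using hq z (Or.inr hz)) hu0
        (fun α hα => Finset.mem_image.2
          ⟨⟨α, (degree_le_totalDegree_of_mem_support hα).trans hu⟩, by simp⟩)
        (by rw [one_mul]; exact hsqdeg hu)
      rw [one_mul] at this
      exact this.le
  · rintro ⟨y, hneg, hpos⟩ ⟨l, l', u, v, hv, hne, heq⟩
    have hu (i : Fin l) : (u i).totalDegree ≤ d := by
      have h₁ := two_mul_totalDegree_le_totalDegree_sum_sq u i
      have h₂ := totalDegree_mul_le_of_mem_sosOn h𝒯 (le_refl g.totalDegree) ⟨l', v, hv, rfl⟩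
      rw [heq] at h₂
      omega
    obtain ⟨j, hj⟩ : ∃ j, v j ≠ 0 := by
      by_contra! hall
      exact hne (by simp [hall])
    rw [Finset.mul_sum] at heq
    have hL := congrArg (LForm n fun α => (y α : ℝ)) heq
    rw [LForm_sum _ fun j => hdeg (hv j), LForm_sum _ fun i => hsqdeg (hu i)] at hL
    have hlt : ∑ j, LForm n (fun α => (y α : ℝ)) (g * v j ^ 2) < 0 := by
      refine Finset.sum_neg' (fun k _ => ?_) ⟨j, Finset.mem_univ j, hneg _ hj (hv j)⟩
      rcases eq_or_ne (v k) 0 with hk | hk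
      · simp [hk, LForm]
      · exact (hneg _ hk (hv k)).le
    exact absurd (Finset.sum_nonneg fun i _ => hpos _ (hu i)) (by rw [← hL]; exact hlt.not_ge)
end

section
/- Let f, g ∈ ℝ[X₁,…,Xₙ] with g ≠ 0, let e ≥ 0 be an integer, set d = e + ⌈(deg(f) − deg(g))/2⌉, and let 𝒯 be a subset of the set of monomials of total degree ≤ e. Then f/g ∈ RSOS(𝒯) if and only if there exist real symmetric positive semidefinite matrices W¹ (rows and columns indexed by the exponent multi-indices of degree ≤ d) and W² (rows and columns indexed by the exponents of the monomials in 𝒯) with trace(W²) = 1 such that the polynomial identity g(X)·Σ_{α,β} W¹_{α,β} X^{α+β} = f(X)·Σ_{γ,δ} W²_{γ,δ} X^{γ+δ} holds. -/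
open MvPolynomial

/-- `d = e + ⌈(deg f − deg g)/2⌉` (clamped at `e` when `deg f < deg g`). -/
def fracDeg (n e : ℕ) (f g : MvPolynomial (Fin n) ℝ) : ℕ :=
  e + ((f.totalDegree : ℤ) - (g.totalDegree : ℤ) + 1).toNat / 2

/-- The polynomial `Σᵢ cᵢ X^{aᵢ}` with exponents `a` and coefficients `c`. -/
noncomputable def combination {n : ℕ} {ι : Type*} [Fintype ι] (a : ι → Fin n →₀ ℕ)
    (c : ι → ℝ) : MvPolynomial (Fin n) ℝ :=
  ∑ i, monomial (a i) (c i)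

/-- The polynomial `Σᵢⱼ Wᵢⱼ X^{aᵢ + aⱼ}` with Gram matrix `W`. -/
noncomputable def gramPoly {n : ℕ} {ι : Type*} [Fintype ι] (a : ι → Fin n →₀ ℕ)
    (W : Matrix ι ι ℝ) : MvPolynomial (Fin n) ℝ :=
  ∑ i, ∑ j, monomial (a i + a j) (W i j)

section

variable {n : ℕ} {ι κ : Type*} [Fintype ι] [Fintype κ] {a : ι → Fin n →₀ ℕ}

theorem coeff_combination (ha : Function.Injective a) (c : ι → ℝ) (i : ι) :
    (combination a c).coeff (a i) = c i := by
  classical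
  simp [combination, coeff_sum, coeff_monomial, ha.eq_iff]

theorem support_combination_subset (c : ι → ℝ) {s : Finset (Fin n →₀ ℕ)}
    (hs : ∀ i, a i ∈ s) : (combination a c).support ⊆ s := by
  classical
  intro m hm
  rw [mem_support_iff, combination, coeff_sum] at hm
  obtain ⟨i, -, hi⟩ := Finset.exists_ne_zero_of_sum_ne_zero hm
  rw [coeff_monomial] at hi
  obtain rfl : a i = m := by by_contra h; simp [h] at hi
  exact hs i

theorem combination_coeff (ha : Function.Injective a) {p : MvPolynomial (Fin n) ℝ}
    (hp : ∀ m ∈ p.support, m ∈ Set.range a) :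
    combination a (fun i => p.coeff (a i)) = p := by
  classical
  ext m
  by_cases hm : m ∈ Set.range a
  · obtain ⟨i, rfl⟩ := hm
    rw [coeff_combination ha]
  · rw [notMem_support_iff.mp (mt (hp m) hm), combination, coeff_sum]
    refine Finset.sum_eq_zero fun i _ => ?_
    rw [coeff_monomial, if_neg fun h => hm ⟨i, h⟩]

theorem gramPoly_conjTranspose_mul_self (B : Matrix κ ι ℝ) :
    gramPoly a (B.conjTranspose * B) = ∑ k, combination a (B k) ^ 2 := by
  simp only [gramPoly, combination, Matrix.mul_apply, Matrix.conjTranspose_apply, star_trivial,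
    map_sum, sq, Finset.sum_mul_sum, monomial_mul]
  simp_rw [Finset.sum_comm (s := (Finset.univ : Finset ι)) (t := (Finset.univ : Finset κ))]

theorem gramPoly_smul (r : ℝ) (W : Matrix ι ι ℝ) : gramPoly a (r • W) = r • gramPoly a W := by
  simp [gramPoly, Finset.smul_sum, smul_monomial]

/-- The coefficient matrix `C` of a family `u` supported on `a` yields the Gram matrix `Cᴴ C`
of `Σₖ uₖ²`. -/
theorem gramPoly_coeff (ha : Function.Injective a) (u : κ → MvPolynomial (Fin n) ℝ)
    (hu : ∀ k, ∀ m ∈ (u k).support, m ∈ Set.range a) :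
    gramPoly a ((Matrix.of fun k i => (u k).coeff (a i)).conjTranspose *
      Matrix.of fun k i => (u k).coeff (a i)) = ∑ k, u k ^ 2 := by
  rw [gramPoly_conjTranspose_mul_self]
  exact Finset.sum_congr rfl fun k _ => congrArg (· ^ 2) (combination_coeff ha (hu k))

/-- Over `ℝ` leading terms of squares do not cancel in a sum of squares. -/
theorem exists_degLex_max_mem_support_sum_sq (u : κ → MvPolynomial (Fin n) ℝ) (k : κ)
    (hk : u k ≠ 0) : ∃ δ : Fin n →₀ ℕ, (u k).totalDegree ≤ δ.degree ∧
      δ + δ ∈ (∑ k, u k ^ 2).support := by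
  classical
  obtain ⟨j, hj, hmax⟩ := Finset.exists_max_image (Finset.univ.filter fun i => u i ≠ 0)
    (fun i => MonomialOrder.degLex.toSyn (MonomialOrder.degLex.degree (u i)))
    ⟨k, by simpa using hk⟩
  have hj0 : u j ≠ 0 := by simpa using hj
  refine ⟨MonomialOrder.degLex.degree (u j), ?_, ?_⟩
  · rw [degree_degLexDegree]
    exact degLex_totalDegree_monotone (hmax k (by simpa using hk))
  · have hle (i : κ) : MonomialOrder.degLex.toSyn (MonomialOrder.degLex.degree (u i)) ≤
        MonomialOrder.degLex.toSyn (MonomialOrder.degLex.degree (u j)) := by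
      by_cases hi : u i = 0
      · simp [hi]
      · exact hmax i (by simpa using hi)
    rw [mem_support_iff, coeff_sum]
    refine (Finset.sum_pos' (fun i _ => ?_) ⟨j, Finset.mem_univ j, ?_⟩).ne'
    · rw [sq, MonomialOrder.coeff_mul_of_add_of_degree_le (hle i) (hle i)]
      exact mul_self_nonneg _
    · rw [sq, MonomialOrder.coeff_mul_of_add_of_degree_le (hle j) (hle j)]
      exact mul_self_pos.mpr (MonomialOrder.leadingCoeff_ne_zero_iff.mpr hj0)

theorem eq_zero_of_sum_sq_eq_zero {u : κ → MvPolynomial (Fin n) ℝ} (h : ∑ k, u k ^ 2 = 0)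
    (k : κ) : u k = 0 := by
  by_contra hk
  obtain ⟨δ, -, hδ⟩ := exists_degLex_max_mem_support_sum_sq u k hk
  simp [h] at hδ

theorem two_mul_totalDegree_le_sum_sq (u : κ → MvPolynomial (Fin n) ℝ) (k : κ) :
    2 * (u k).totalDegree ≤ (∑ k, u k ^ 2).totalDegree := by
  by_cases hk : u k = 0
  · simp [hk]
  obtain ⟨δ, hle, hδ⟩ := exists_degLex_max_mem_support_sum_sq u k hk
  have : (δ + δ).degree ≤ (∑ k, u k ^ 2).totalDegree := le_totalDegree hδ
  rw [map_add] at this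
  omega

theorem totalDegree_sum_sq_le (v : κ → MvPolynomial (Fin n) ℝ) (e : ℕ)
    (hv : ∀ k, (v k).totalDegree ≤ e) : (∑ k, v k ^ 2).totalDegree ≤ 2 * e :=
  totalDegree_finsetSum_le fun k _ =>
    (totalDegree_pow _ _).trans (Nat.mul_le_mul_left 2 (hv k))

end

theorem totalDegree_le_fracDeg {n e l l' : ℕ} {f g : MvPolynomial (Fin n) ℝ} (hg : g ≠ 0)
    {u : Fin l → MvPolynomial (Fin n) ℝ} {v : Fin l' → MvPolynomial (Fin n) ℝ}
    (hv : ∀ j, (v j).totalDegree ≤ e) (h : f * (∑ j, v j ^ 2) = g * ∑ i, u i ^ 2) (i : Fin l) :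
    (u i).totalDegree ≤ fracDeg n e f g := by
  by_cases hu : ∑ i, u i ^ 2 = 0
  · simp [eq_zero_of_sum_sq_eq_zero hu i]
  have hdeg : g.totalDegree + (∑ i, u i ^ 2).totalDegree ≤
      f.totalDegree + (∑ j, v j ^ 2).totalDegree := by
    rw [← totalDegree_mul_of_isDomain hg hu, ← h]
    exact totalDegree_mul _ _
  have hu' := two_mul_totalDegree_le_sum_sq u i
  have hv' := totalDegree_sum_sq_le v e hv
  unfold fracDeg
  omega

open scoped MatrixOrder in
/-- A polynomial with positive semidefinite Gram matrix is a sum of squares of polynomials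
supported on the indexing exponents. -/
theorem exists_sum_sq_eq_gramPoly {n : ℕ} {ι : Type*} [Fintype ι] (a : ι → Fin n →₀ ℕ)
    {W : Matrix ι ι ℝ} (hW : W.PosSemidef) :
    ∃ (l : ℕ) (B : Matrix (Fin l) ι ℝ), W = B.conjTranspose * B ∧
      gramPoly a W = ∑ k, combination a (B k) ^ 2 := by
  classical
  obtain ⟨B, rfl⟩ : ∃ B : Matrix ι ι ℝ, W = B.conjTranspose * B :=
    CStarAlgebra.nonneg_iff_eq_star_mul_self.mp hW.nonneg
  let σ := Fintype.equivFin ι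
  have hB : B.conjTranspose * B =
      (B.submatrix σ.symm id).conjTranspose * B.submatrix σ.symm id := by
    rw [Matrix.conjTranspose_submatrix, Matrix.submatrix_mul_equiv, Matrix.submatrix_id_id]
  refine ⟨Fintype.card ι, B.submatrix σ.symm id, hB, ?_⟩
  rw [hB, gramPoly_conjTranspose_mul_self]

/-- for `g ≠ 0`, `f/g ∈ RSOS(𝒯)` iff there are PSD matrices `W¹`
(indexed by multi-indices of degree `≤ d`) and `W²` (indexed by the exponents of
the monomials in `𝒯`) with `trace W² = 1` such that
`g · Σ_{α,β} W¹_{α,β} X^{α+β} = f · Σ_{γ,δ} W²_{γ,δ} X^{γ+δ}`. -/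
theorem statement8 (n e : ℕ) (f g : MvPolynomial (Fin n) ℝ) (hg : g ≠ 0)
    (𝒯 : Finset (Fin n →₀ ℕ)) (h𝒯 : ∀ α ∈ 𝒯, α.degree ≤ e) :
    RSOSfrac n 𝒯 f g ↔
      ∃ (W₁ : Matrix (Idx n (fracDeg n e f g)) (Idx n (fracDeg n e f g)) ℝ)
        (W₂ : Matrix 𝒯 𝒯 ℝ),
        W₁.PosSemidef ∧ W₂.PosSemidef ∧ W₂.trace = 1 ∧
        g * (∑ α, ∑ β, monomial (α.1 + β.1) (W₁ α β)) =
          f * ∑ γ, ∑ δ, monomial (γ.1 + δ.1) (W₂ γ δ) := by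
  classical
  change _ ↔ ∃ (W₁ : Matrix (Idx n (fracDeg n e f g)) (Idx n (fracDeg n e f g)) ℝ)
        (W₂ : Matrix 𝒯 𝒯 ℝ), W₁.PosSemidef ∧ W₂.PosSemidef ∧ W₂.trace = 1 ∧
        g * gramPoly Subtype.val W₁ = f * gramPoly Subtype.val W₂
  constructor
  · rintro ⟨l, l', u, v, hv, hv0, h⟩
    have hvdeg (j : Fin l') : (v j).totalDegree ≤ e :=
      Finset.sup_le fun m hm => h𝒯 m (hv j hm)
    have h₁ := gramPoly_coeff (a := (Subtype.val : Idx n (fracDeg n e f g) → _))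
      Subtype.val_injective u fun k m hm =>
        ⟨⟨m, (le_totalDegree hm).trans (totalDegree_le_fracDeg hg hvdeg h k)⟩, rfl⟩
    have h₂ := gramPoly_coeff (a := (Subtype.val : 𝒯 → _))
      Subtype.val_injective v fun k m hm => ⟨⟨m, hv k hm⟩, rfl⟩
    set A : Matrix (Fin l) (Idx n (fracDeg n e f g)) ℝ := Matrix.of fun k i => (u k).coeff i.1
    set B : Matrix (Fin l') 𝒯 ℝ := Matrix.of fun k i => (v k).coeff i.1
    have hA : (A.conjTranspose * A).PosSemidef := Matrix.posSemidef_conjTranspose_mul_self A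
    have hB : (B.conjTranspose * B).PosSemidef := Matrix.posSemidef_conjTranspose_mul_self B
    have htr : (B.conjTranspose * B).trace ≠ 0 := by
      rw [Ne, hB.trace_eq_zero_iff]
      intro h0
      apply hv0
      rw [← h₂, h0]
      simp [gramPoly]
    have hr : 0 ≤ (B.conjTranspose * B).trace⁻¹ := inv_nonneg.mpr hB.trace_nonneg
    refine ⟨_, _, hA.smul hr, hB.smul hr, ?_, ?_⟩
    · rw [Matrix.trace_smul, smul_eq_mul, inv_mul_cancel₀ htr]
    · rw [gramPoly_smul, gramPoly_smul, h₁, h₂, mul_smul_comm, mul_smul_comm, h]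
  · rintro ⟨W₁, W₂, hW₁, hW₂, htr, h⟩
    obtain ⟨l, A, -, hA⟩ := exists_sum_sq_eq_gramPoly Subtype.val hW₁
    obtain ⟨l', B, rfl, hB⟩ := exists_sum_sq_eq_gramPoly Subtype.val hW₂
    refine ⟨l, l', fun k => combination Subtype.val (A k), _, fun j => support_combination_subset (B j) Subtype.property, ?_, ?_⟩
    · intro h0
      have hB0 : B = 0 := by
        ext k i
        rw [← coeff_combination Subtype.val_injective (B k) i, eq_zero_of_sum_sq_eq_zero h0 k]
        simp
      simp [hB0] at htr
    · rw [← hA, ← hB, h]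
end
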